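/- Let G₂₂ be the simple graph on vertex set {1,…,22} whose edge set is exactly {1,4},{1,7},{1,9},{2,4},{2,7},{2,8},{3,4},{3,5},{3,6},{5,7},{5,9},{5,11},{6,7},{6,8},{6,10},{8,9},{8,11},{9,10},{10,12},{10,13},{11,12},{11,13},{12,15},{12,17},{13,14},{13,16},{14,15},{14,20},{14,22},{15,16},{15,19},{16,17},{16,18},{17,20},{17,22},{18,20},{18,21},{19,20},{19,21},{21,22}. Then G₂₂ is triangle-free, has maximum degree 4, and has chromatic number 4. -/

import Mathlib

/-- The edge list of the graph `G₂₂` on vertex set `{1, …, 22}`. -/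
def edges22 : List (ℕ × ℕ) :=
  [(1,4),(1,7),(1,9),
   (2,4),(2,7),(2,8),
   (3,4),(3,5),(3,6),
   (5,7),(5,9),(5,11),
   (6,7),(6,8),(6,10),
   (8,9),(8,11),
   (9,10),
   (10,12),(10,13),
   (11,12),(11,13),
   (12,15),(12,17),
   (13,14),(13,16),
   (14,15),(14,20),(14,22),
   (15,16),(15,19),
   (16,17),(16,18),
   (17,20),(17,22),
   (18,20),(18,21),
   (19,20),(19,21),
   (21,22)]

/-- The simple graph `G₂₂` on vertex set `{1, …, 22}` (modeled as `Fin 22`, with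
vertex `i : Fin 22` representing the label `i + 1`) whose edges are exactly those
listed in `edges22`. -/
def G22 : SimpleGraph (Fin 22) :=
  SimpleGraph.fromRel (fun u v => ((u.val + 1, v.val + 1) ∈ edges22))

instance : DecidableRel G22.Adj := fun a b =>
  decidable_of_iff (a ≠ b ∧ ((a.val + 1, b.val + 1) ∈ edges22 ∨ (b.val + 1, a.val + 1) ∈ edges22))
    (by simp [G22, SimpleGraph.fromRel_adj])

set_option synthInstance.maxHeartbeats 2000000 in
set_option synthInstance.maxSize 10000 in
set_option maxHeartbeats 4000000 in
set_option maxRecDepth 100000 in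
/-- Exhaustive search: no assignment of three colors is proper. -/
theorem no_three_coloring :
    ∀ c0 : Fin 3, 
    ∀ c3 : Fin 3, c0 ≠ c3 → 
    ∀ c1 : Fin 3, c3 ≠ c1 → 
    ∀ c7 : Fin 3, c1 ≠ c7 → 
    ∀ c8 : Fin 3, c0 ≠ c8 → c7 ≠ c8 → 
    ∀ c6 : Fin 3, c0 ≠ c6 → c1 ≠ c6 → 
    ∀ c4 : Fin 3, c8 ≠ c4 → c6 ≠ c4 → 
    ∀ c2 : Fin 3, c3 ≠ c2 → c4 ≠ c2 → 
    ∀ c5 : Fin 3, c7 ≠ c5 → c6 ≠ c5 → c2 ≠ c5 → 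
    ∀ c9 : Fin 3, c8 ≠ c9 → c5 ≠ c9 → 
    ∀ c10 : Fin 3, c7 ≠ c10 → c4 ≠ c10 → 
    ∀ c11 : Fin 3, c9 ≠ c11 → c10 ≠ c11 → 
    ∀ c12 : Fin 3, c9 ≠ c12 → c10 ≠ c12 → 
    ∀ c13 : Fin 3, c12 ≠ c13 → 
    ∀ c14 : Fin 3, c11 ≠ c14 → c13 ≠ c14 → 
    ∀ c15 : Fin 3, c12 ≠ c15 → c14 ≠ c15 → 
    ∀ c16 : Fin 3, c11 ≠ c16 → c15 ≠ c16 → 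
    ∀ c19 : Fin 3, c13 ≠ c19 → c16 ≠ c19 → 
    ∀ c17 : Fin 3, c15 ≠ c17 → c19 ≠ c17 → 
    ∀ c18 : Fin 3, c14 ≠ c18 → c19 ≠ c18 → 
    ∀ c20 : Fin 3, c17 ≠ c20 → c18 ≠ c20 → 
    ∀ c21 : Fin 3, c13 ≠ c21 → c16 ≠ c21 → c20 ≠ c21 → False := by
  decide +kernel

theorem not_colorable_three : ¬ G22.Colorable 3 := by
  rintro ⟨C⟩
  have h : ∀ a b : Fin 22, G22.Adj a b → C a ≠ C b := fun a b hab => C.valid hab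
  exact no_three_coloring
    (C 0)
    (C 3) (h 0 3 (by decide))
    (C 1) (h 3 1 (by decide))
    (C 7) (h 1 7 (by decide))
    (C 8) (h 0 8 (by decide)) (h 7 8 (by decide))
    (C 6) (h 0 6 (by decide)) (h 1 6 (by decide))
    (C 4) (h 8 4 (by decide)) (h 6 4 (by decide))
    (C 2) (h 3 2 (by decide)) (h 4 2 (by decide))
    (C 5) (h 7 5 (by decide)) (h 6 5 (by decide)) (h 2 5 (by decide))
    (C 9) (h 8 9 (by decide)) (h 5 9 (by decide))
    (C 10) (h 7 10 (by decide)) (h 4 10 (by decide))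
    (C 11) (h 9 11 (by decide)) (h 10 11 (by decide))
    (C 12) (h 9 12 (by decide)) (h 10 12 (by decide))
    (C 13) (h 12 13 (by decide))
    (C 14) (h 11 14 (by decide)) (h 13 14 (by decide))
    (C 15) (h 12 15 (by decide)) (h 14 15 (by decide))
    (C 16) (h 11 16 (by decide)) (h 15 16 (by decide))
    (C 19) (h 13 19 (by decide)) (h 16 19 (by decide))
    (C 17) (h 15 17 (by decide)) (h 19 17 (by decide))
    (C 18) (h 14 18 (by decide)) (h 19 18 (by decide))
    (C 20) (h 17 20 (by decide)) (h 18 20 (by decide))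
    (C 21) (h 13 21 (by decide)) (h 16 21 (by decide)) (h 20 21 (by decide))

theorem colorable_four : G22.Colorable 4 := by
  refine ⟨SimpleGraph.Coloring.mk
    (![0, 0, 0, 1, 1, 1, 2, 2, 3, 0, 0, 1, 1, 0, 2, 0, 2, 1, 0, 3, 2, 1] : Fin 22 → Fin 4) ?_⟩
  have h : ∀ a b : Fin 22, G22.Adj a b →
    (![0, 0, 0, 1, 1, 1, 2, 2, 3, 0, 0, 1, 1, 0, 2, 0, 2, 1, 0, 3, 2, 1] : Fin 22 → Fin 4) a ≠
    (![0, 0, 0, 1, 1, 1, 2, 2, 3, 0, 0, 1, 1, 0, 2, 0, 2, 1, 0, 3, 2, 1] : Fin 22 → Fin 4) b := by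
    decide +kernel
  exact fun {a b} hab => h a b hab

theorem triangle_free : G22.CliqueFree 3 := by
  intro s hs
  obtain ⟨a, b, c, hab, hac, hbc, -⟩ := SimpleGraph.is3Clique_iff.mp hs
  have h : ∀ a b : Fin 22, G22.Adj a b → ∀ c, G22.Adj a c → ¬ G22.Adj b c := by decide +kernel
  exact h a b hab c hac hbc

theorem ncard_nbr (v : Fin 22) :
    (G22.neighborSet v).ncard = (Finset.univ.filter (fun w => G22.Adj v w)).card := by
  rw [← Set.ncard_coe_finset]
  congr 1
  ext w
  simp

/-- `G₂₂` is triangle-free, has maximum degree 4 (every vertex has at most 4 neighbors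
and some vertex has exactly 4 neighbors), and has chromatic number 4. -/
theorem stmt_16 :
    G22.CliqueFree 3 ∧
    (∀ v, (G22.neighborSet v).ncard ≤ 4) ∧ (∃ v, (G22.neighborSet v).ncard = 4) ∧
    G22.chromaticNumber = 4 := by
  refine ⟨triangle_free, ?_, ⟨4, ?_⟩, ?_⟩
  · intro v
    rw [ncard_nbr]
    revert v
    decide +kernel
  · rw [ncard_nbr]
    decide +kernel
  · exact SimpleGraph.chromaticNumber_eq_iff_colorable_not_colorable.mpr
      ⟨colorable_four, not_colorable_three⟩
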